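/- arXiv:2411.04353 — 4 statements merged into one kernel-verified Lean document; each statement's English description precedes it below -/
import Mathlib

section
/- Let |ψ₀⟩ and |ψ₁⟩ be n-qudit pure states that are cutwise orthogonal with respect to a bipartition (A,B), i.e., ρ₀^{(A)} ρ₁^{(A)} = 0 and ρ₀^{(B)} ρ₁^{(B)} = 0 where ρ_i^{(A)}, ρ_i^{(B)} are the reduced density matrices of |ψ_i⟩ on A and B. Then the entanglement entropy of (1/√2)(|ψ₀⟩ + |ψ₁⟩) with respect to (A,B) equals ½(S(ρ₀^{(A)}) + S(ρ₁^{(A)})) + log 2. -/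
open scoped BigOperators

noncomputable def vN {d : Type*} [Fintype d] [DecidableEq d] (ρ : Matrix d d ℂ) : ℝ :=
  if h : ρ.IsHermitian then ∑ i, Real.negMulLog (h.eigenvalues i) else 0

noncomputable def outer {α : Type*} (ψ : α → ℂ) : Matrix α α ℂ :=
  Matrix.of fun x y => ψ x * star (ψ y)

noncomputable def ptraceB {A B : Type*} [Fintype B] (ρ : Matrix (A × B) (A × B) ℂ) :
    Matrix A A ℂ :=
  Matrix.of fun a a' => ∑ b, ρ (a, b) (a', b)

noncomputable def ptraceA {A B : Type*} [Fintype A] (ρ : Matrix (A × B) (A × B) ℂ) :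
    Matrix B B ℂ :=
  Matrix.of fun b b' => ∑ a, ρ (a, b) (a, b')

/-!
Write a bipartite vector as its matrix `K` of amplitudes, so that the reduced states are `K * Kᴴ`
on `A` and `(Kᴴ * K)ᵀ` on `B`. Orthogonality on `B` forces `K₁ * K₀ᴴ = 0`, which kills the
interference terms on `A`: the reduced state of a superposition is the weighted sum of the two
reduced states. These are orthogonal as well, so the nonzero spectrum of the sum is the union of
the two nonzero spectra, and the entropy is additive. The identity behind the last step is
`(X - M) * (X - N) = X * (X - (M + N))` for `M * N = 0`. Rescaling a state of trace one by `c`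
turns its entropy `S` into `c * S - c * log c`.
-/

open Matrix Polynomial

section Charpoly

variable {n R : Type*} [Fintype n] [DecidableEq n] [CommRing R] {M N : Matrix n n R}

theorem charmatrix_mul_charmatrix_of_mul_eq_zero (h : M * N = 0) :
    charmatrix M * charmatrix N = (X : R[X]) • charmatrix (M + N) := by
  have hC : C.mapMatrix M * C.mapMatrix N = 0 := by rw [← map_mul, h, map_zero]
  simp only [charmatrix, scalar_apply, ← smul_one_eq_diagonal, map_add, sub_mul, mul_sub,
    smul_mul_assoc, mul_smul_comm, one_mul, mul_one, hC, smul_sub, smul_add]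
  abel

theorem charpoly_mul_charpoly_of_mul_eq_zero (h : M * N = 0) :
    M.charpoly * N.charpoly = X ^ Fintype.card n * (M + N).charpoly := by
  simp only [charpoly, ← det_mul, charmatrix_mul_charmatrix_of_mul_eq_zero h, det_smul]

theorem roots_charpoly_add_roots_charpoly_of_mul_eq_zero [IsDomain R] (h : M * N = 0) :
    M.charpoly.roots + N.charpoly.roots =
      Fintype.card n • {0} + (M + N).charpoly.roots := by
  rw [← roots_mul (mul_ne_zero M.charpoly_monic.ne_zero N.charpoly_monic.ne_zero),
    charpoly_mul_charpoly_of_mul_eq_zero h,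
    roots_mul (mul_ne_zero (pow_ne_zero _ X_ne_zero) (M + N).charpoly_monic.ne_zero), roots_X_pow]

end Charpoly

theorem conjTranspose_mul_self_mul_conjTranspose_mul_self_eq_zero {l m n R : Type*}
    [Fintype l] [Fintype m] [Fintype n] [NonUnitalRing R] [PartialOrder R] [StarRing R]
    [StarOrderedRing R] [NoZeroDivisors R] (P : Matrix l n R) (Q : Matrix m n R) :
    Pᴴ * P * (Qᴴ * Q) = 0 ↔ P * Qᴴ = 0 := by
  rw [mul_conjTranspose_mul_self_eq_zero, conjTranspose_mul_self_mul_eq_zero]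

section Entropy

variable {d : Type*} [Fintype d] [DecidableEq d] {M N : Matrix d d ℂ}

theorem vN_eq_sum_roots_charpoly (hM : M.IsHermitian) :
    vN M = (M.charpoly.roots.map fun z => Real.negMulLog z.re).sum := by
  simp [vN, hM, hM.roots_charpoly_eq_eigenvalues]

theorem vN_add_of_mul_eq_zero (hM : M.IsHermitian) (hN : N.IsHermitian) (h : M * N = 0) :
    vN (M + N) = vN M + vN N := by
  rw [vN_eq_sum_roots_charpoly hM, vN_eq_sum_roots_charpoly hN,
    vN_eq_sum_roots_charpoly (hM.add hN), ← Multiset.sum_add, ← Multiset.map_add,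
    roots_charpoly_add_roots_charpoly_of_mul_eq_zero h]
  simp [Multiset.map_nsmul, Multiset.sum_nsmul]

theorem vN_cfc (hM : M.IsHermitian) (f : ℝ → ℝ) :
    vN (cfc f M) = ∑ i, Real.negMulLog (f (hM.eigenvalues i)) := by
  have hroots : (cfc f M).charpoly.roots =
      Finset.univ.val.map fun i => ((f (hM.eigenvalues i) : ℝ) : ℂ) := by
    rw [hM.charpoly_cfc_eq, roots_prod _ _ (Finset.prod_ne_zero_iff.mpr fun i _ =>
      X_sub_C_ne_zero _)]
    simp
  rw [vN_eq_sum_roots_charpoly (cfc_predicate f M), hroots]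
  simp

theorem vN_smul (hM : M.IsHermitian) (c : ℝ) :
    vN (c • M) = c * vN M + Real.negMulLog c * M.trace.re := by
  have htrace : M.trace.re = ∑ i, hM.eigenvalues i := by simp [hM.trace_eq_sum_eigenvalues]
  have hcfc : cfc (c * ·) M = c • M := cfc_const_mul_id c M hM.isSelfAdjoint
  rw [← hcfc, vN_cfc hM, vN, dif_pos hM, htrace]
  simp only [Real.negMulLog_mul, Finset.sum_add_distrib, ← Finset.mul_sum, ← Finset.sum_mul]
  ring

end Entropy

section PureState

variable {A B : Type*}

/-- The matrix `a, b ↦ ψ (a, b)` of a vector of `H_A ⊗ H_B`, that is, the vector seen as an operator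
from `H_B` to `H_A`. It expresses both reduced states of `ψ` as matrix products. -/
def amplitudeMatrix (ψ : A × B → ℂ) : Matrix A B ℂ :=
  Matrix.of (Function.curry ψ)

theorem amplitudeMatrix_superposition (ψ₀ ψ₁ : A × B → ℂ) (a b : ℂ) :
    amplitudeMatrix (fun x => a * ψ₀ x + b * ψ₁ x) =
      a • amplitudeMatrix ψ₀ + b • amplitudeMatrix ψ₁ :=
  rfl

theorem ptraceB_outer [Fintype B] (ψ : A × B → ℂ) :
    ptraceB (outer ψ) = amplitudeMatrix ψ * (amplitudeMatrix ψ)ᴴ :=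
  rfl

theorem ptraceA_outer [Fintype A] (ψ : A × B → ℂ) :
    ptraceA (outer ψ) = ((amplitudeMatrix ψ)ᴴ * amplitudeMatrix ψ)ᵀ := by
  ext b b'
  simp [ptraceA, outer, amplitudeMatrix, mul_apply, mul_comm]

theorem isHermitian_ptraceB_outer [Fintype B] (ψ : A × B → ℂ) :
    (ptraceB (outer ψ)).IsHermitian :=
  isHermitian_mul_conjTranspose_self (amplitudeMatrix ψ)

variable [Fintype A] [Fintype B]

theorem trace_ptraceB_outer (ψ : A × B → ℂ) :
    (ptraceB (outer ψ)).trace = ((∑ x, ‖ψ x‖ ^ 2 : ℝ) : ℂ) := by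
  simp [trace, ptraceB, outer, Fintype.sum_prod_type, Complex.mul_conj']

variable {ψ₀ ψ₁ : A × B → ℂ}

open scoped ComplexOrder in
theorem ptraceA_outer_mul_ptraceA_outer_eq_zero_iff :
    ptraceA (outer ψ₀) * ptraceA (outer ψ₁) = 0 ↔
      amplitudeMatrix ψ₁ * (amplitudeMatrix ψ₀)ᴴ = 0 := by
  rw [ptraceA_outer, ptraceA_outer, ← transpose_mul, transpose_eq_zero,
    conjTranspose_mul_self_mul_conjTranspose_mul_self_eq_zero]

theorem ptraceB_outer_superposition (h : ptraceA (outer ψ₀) * ptraceA (outer ψ₁) = 0) (a b : ℂ) :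
    ptraceB (outer fun x => a * ψ₀ x + b * ψ₁ x) =
      ‖a‖ ^ 2 • ptraceB (outer ψ₀) + ‖b‖ ^ 2 • ptraceB (outer ψ₁) := by
  have h₁₀ := ptraceA_outer_mul_ptraceA_outer_eq_zero_iff.mp h
  have h₀₁ : amplitudeMatrix ψ₀ * (amplitudeMatrix ψ₁)ᴴ = 0 := by
    simpa using congrArg conjTranspose h₁₀
  have hnorm (c : ℂ) (P : Matrix A A ℂ) : (star c * c) • P = ‖c‖ ^ 2 • P := by
    rw [← Complex.coe_smul, Complex.ofReal_pow, ← Complex.conj_mul', starRingEnd_apply]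
  simp only [ptraceB_outer, amplitudeMatrix_superposition, conjTranspose_add, conjTranspose_smul,
    Matrix.add_mul, Matrix.mul_add, smul_mul, Matrix.mul_smul, h₀₁, h₁₀, smul_zero, add_zero,
    zero_add, smul_smul, hnorm]

end PureState

theorem cutwise_orthogonal_entanglement_general
    {A B : Type*} [Fintype A] [DecidableEq A] [Fintype B] (ψ₀ ψ₁ : A × B → ℂ)
    (h₀ : ∑ x, ‖ψ₀ x‖ ^ 2 = 1) (h₁ : ∑ x, ‖ψ₁ x‖ ^ 2 = 1)
    (hcutA : ptraceB (outer ψ₀) * ptraceB (outer ψ₁) = 0)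
    (hcutB : ptraceA (outer ψ₀) * ptraceA (outer ψ₁) = 0) (a b : ℂ) :
    vN (ptraceB (outer fun x => a * ψ₀ x + b * ψ₁ x)) =
      ‖a‖ ^ 2 * vN (ptraceB (outer ψ₀)) + ‖b‖ ^ 2 * vN (ptraceB (outer ψ₁)) +
        (Real.negMulLog (‖a‖ ^ 2) + Real.negMulLog (‖b‖ ^ 2)) := by
  have hρ₀ := isHermitian_ptraceB_outer ψ₀
  have hρ₁ := isHermitian_ptraceB_outer ψ₁
  have horth : ‖a‖ ^ 2 • ptraceB (outer ψ₀) * ‖b‖ ^ 2 • ptraceB (outer ψ₁) = 0 := by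
    rw [smul_mul_smul_comm, hcutA, smul_zero]
  calc
    vN (ptraceB (outer fun x => a * ψ₀ x + b * ψ₁ x))
    _ = vN (‖a‖ ^ 2 • ptraceB (outer ψ₀) + ‖b‖ ^ 2 • ptraceB (outer ψ₁)) := by
      rw [ptraceB_outer_superposition hcutB]
    _ = vN (‖a‖ ^ 2 • ptraceB (outer ψ₀)) + vN (‖b‖ ^ 2 • ptraceB (outer ψ₁)) :=
      vN_add_of_mul_eq_zero (hρ₀.smul (.all _)) (hρ₁.smul (.all _)) horth
    _ = ‖a‖ ^ 2 * vN (ptraceB (outer ψ₀)) + ‖b‖ ^ 2 * vN (ptraceB (outer ψ₁)) +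
        (Real.negMulLog (‖a‖ ^ 2) + Real.negMulLog (‖b‖ ^ 2)) := by
      rw [vN_smul hρ₀, vN_smul hρ₁, trace_ptraceB_outer, trace_ptraceB_outer, h₀, h₁,
        Complex.ofReal_one, Complex.one_re]
      ring

/-- Lemma 4.13 of Bouland et al.: if `|ψ₀⟩, |ψ₁⟩` are cutwise orthogonal with respect to the
bipartition `(A,B)`, then the entanglement entropy of `(|ψ₀⟩+|ψ₁⟩)/√2` with respect to `(A,B)`
equals `(S(ρ₀^A) + S(ρ₁^A))/2 + log 2`. -/
theorem cutwise_orthogonal_entanglement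
    {A B : Type*} [Fintype A] [DecidableEq A] [Fintype B] [DecidableEq B]
    (ψ₀ ψ₁ : A × B → ℂ)
    (h₀ : ∑ x, ‖ψ₀ x‖ ^ 2 = 1) (h₁ : ∑ x, ‖ψ₁ x‖ ^ 2 = 1)
    (hcutA : ptraceB (outer ψ₀) * ptraceB (outer ψ₁) = 0)
    (hcutB : ptraceA (outer ψ₀) * ptraceA (outer ψ₁) = 0) :
    vN (ptraceB (outer fun x => ((Real.sqrt 2 : ℝ) : ℂ)⁻¹ * (ψ₀ x + ψ₁ x)))
      = (vN (ptraceB (outer ψ₀)) + vN (ptraceB (outer ψ₁))) / 2 + Real.log 2 := by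
  have hlog : Real.negMulLog 2⁻¹ = Real.log 2 / 2 := by
    rw [Real.negMulLog, Real.log_inv]
    ring
  have hnorm : ‖((Real.sqrt 2 : ℝ) : ℂ)⁻¹‖ ^ 2 = 2⁻¹ := by simp
  simp only [mul_add, cutwise_orthogonal_entanglement_general ψ₀ ψ₁ h₀ h₁ hcutA hcutB, hnorm, hlog]
  ring
end

section
/- Let p = 17, let q be a prime with q ≥ 2p, and let m ≥ 1. Define for A ∈ ℤ_q^{m×m} the function h_A : {0,1}^m → ℤ_p^m by h_A(x) = ⌊A·x⌋^s_p (coordinatewise shifted rounding). Then for a uniformly random A ← ℤ_q^{m×m}, the probability that h_A is injective is at least 1 − 2^{2m}·(1/p + 1/q)^m; in particular, since 1/p + 1/q ≤ 1/(p−1) = 1/16, this probability is at least 1 − 2^{−2m}. -/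
open scoped BigOperators

/-- Shifted rounding operation `⌊·⌋^s_p : ℤ_q → ℤ_p` (nearly-even bins, shifted by
`⌊⌊q/p⌋/2⌋`). -/
def sround (q p : ℕ) (x : ZMod q) : ZMod p :=
  ((((x.val + q / p / 2) % q) * p) / q : ℕ)

/-- `h_A(x) = ⌊A·x⌋^s_p` coordinatewise, for `x ∈ {0,1}^m` viewed as a 0/1 vector over `ℤ_q`. -/
def hfun (q m : ℕ) [NeZero q] (A : Matrix (Fin m) (Fin m) (ZMod q)) (x : Fin m → Bool) :
    Fin m → ZMod 17 :=
  fun i => sround q 17 (∑ j, A i j * (if x j then 1 else 0))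

/-!
If `x ≠ y` are nonzero bit strings, then `a ↦ (a·x, a·y)` is a surjective homomorphism onto
`ℤ_q × ℤ_q` for every modulus `q`, so on a uniform row `a` the two strings collide exactly as often
as two independent uniform residues. If one of the strings is zero, they collide when a single
uniform residue falls into the bin of `0`. All bins have `⌊q/p⌋` or `⌊q/p⌋ + 1` elements, so either
way a row collides with probability at most `1/p + 1/q`, and rows are independent.

The inequality `1/p + 1/q ≤ 1/(p-1)` of the informal statement fails for `p = 17`, `q < 272`. In its
place, writing `k = ⌊q/p⌋`, completing the square in the sum of the squared bin sizes shows that two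
independent residues collide with probability at most `1/(p-1)` as soon as `p ≤ (2k+1)²`. Only the
`2^m - 1` pairs containing the zero string keep the weaker bound, and the union bound absorbs their
excess because it counts unordered pairs.
-/

open Finset
open scoped Matrix

section UniformProbability

theorem dens_filter_comp_of_surjective {G H : Type*} [AddGroup G] [Fintype G] [AddGroup H]
    [Fintype H] (f : G →+ H) (hf : Function.Surjective f) (P : H → Prop) [DecidablePred P] :
    ({g | P (f g)} : Finset G).dens = ({h | P h} : Finset H).dens := by
  classical
  have card_fiber (h : H) : #{g | f g = h} = #{g | f g = 0} :=
    AddMonoidHom.card_fiber_eq_of_mem_range f (hf h) (hf 0)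
  have card_filter_comp (Q : H → Prop) [DecidablePred Q] :
      #{g | Q (f g)} = #{h | Q h} * #{g | f g = 0} := by
    simpa [card_fiber] using (sum_card_fiberwise_eq_card_filter univ {h | Q h} f).symm
  have card_G : Fintype.card G = Fintype.card H * #{g | f g = 0} := by
    simpa using card_filter_comp fun _ ↦ True
  have fiber_pos : (#{g | f g = 0} : ℚ≥0) ≠ 0 := by
    have : 0 ∈ ({g | f g = 0} : Finset G) := by simp
    exact_mod_cast (card_pos.2 ⟨0, this⟩).ne'
  rw [dens_eq_card_div_card, dens_eq_card_div_card, card_filter_comp, card_G]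
  push_cast
  exact mul_div_mul_right _ _ fiber_pos

theorem dens_filter_forall_row {ι κ R : Type*} [Fintype ι] [DecidableEq ι] [Fintype κ]
    [DecidableEq κ] [Fintype R] (P : (κ → R) → Prop) [DecidablePred P]
    [DecidablePred fun A : Matrix ι κ R ↦ ∀ i, P (A i)] :
    ({A | ∀ i, P (A i)} : Finset (Matrix ι κ R)).dens =
      ({a | P a} : Finset (κ → R)).dens ^ Fintype.card ι := by
  have card_eq : #{A : Matrix ι κ R | ∀ i, P (A i)} = #{a | P a} ^ Fintype.card ι :=
    calc
      #{A : Matrix ι κ R | ∀ i, P (A i)} = #(Fintype.piFinset fun _ : ι ↦ {a | P a}) :=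
        card_equiv Matrix.of.symm fun A ↦ by
          simp only [mem_filter, mem_univ, true_and, Fintype.mem_piFinset]
          rfl
      _ = #{a | P a} ^ Fintype.card ι := by simp
  rw [dens_eq_card_div_card, dens_eq_card_div_card, card_eq, div_pow,
    Fintype.card_congr (Matrix.of (m := ι) (n := κ) (α := R)).symm, Fintype.card_fun]
  push_cast
  rfl

/-- Each non-injective function is counted at least twice on the right, once per ordering of a
colliding pair. -/
theorem two_mul_dens_not_injective_le {Ω α β : Type*} [Fintype Ω] [Fintype α] [DecidableEq β]
    (f : Ω → α → β) :
    2 * ({ω | ¬ Function.Injective (f ω)} : Finset Ω).dens ≤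
      ∑ z ∈ (univ : Finset α).offDiag, ({ω | f ω z.1 = f ω z.2} : Finset Ω).dens := by
  classical
  let collides (ω : Ω) (z : α × α) : Prop := f ω z.1 = f ω z.2
  have two_le_card_collisions : ∀ ω ∈ ({ω | ¬ Function.Injective (f ω)} : Finset Ω),
      2 ≤ #(univ.offDiag.bipartiteAbove collides ω) := by
    intro ω hω
    obtain ⟨x, y, hxy, hne⟩ := Function.not_injective_iff.1 (mem_filter.1 hω).2
    rw [← card_pair (a := (x, y)) (b := (y, x)) (by simp [hne])]
    refine card_le_card fun z hz ↦ ?_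
    obtain rfl | rfl : z = (x, y) ∨ z = (y, x) := by simpa using hz
    · simpa [collides, hne] using hxy
    · simpa [collides, hne.symm] using hxy.symm
  have count : 2 * #{ω | ¬ Function.Injective (f ω)} ≤
      ∑ z ∈ (univ : Finset α).offDiag, #{ω | f ω z.1 = f ω z.2} :=
    calc
      2 * #{ω | ¬ Function.Injective (f ω)}
        ≤ ∑ ω with ¬ Function.Injective (f ω), #(univ.offDiag.bipartiteAbove collides ω) := by
          simpa [mul_comm] using card_nsmul_le_sum _ _ _ two_le_card_collisions
      _ ≤ ∑ ω, #(univ.offDiag.bipartiteAbove collides ω) :=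
          sum_le_sum_of_subset (filter_subset _ _)
      _ = ∑ z ∈ (univ : Finset α).offDiag, #{ω | f ω z.1 = f ω z.2} :=
          sum_card_bipartiteAbove_eq_sum_card_bipartiteBelow _
  simp only [dens_eq_card_div_card, ← sum_div, ← mul_div_assoc]
  gcongr
  exact_mod_cast count

theorem natCard_subtype_div_eq_one_sub_dens_not {Ω : Type*} [Fintype Ω] [Nonempty Ω] (P : Ω → Prop)
    [DecidablePred P] :
    (Nat.card {ω // P ω} : ℝ) / Fintype.card Ω = 1 - (({ω | ¬ P ω} : Finset Ω).dens : ℝ) := by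
  have h := dens_filter_add_dens_filter_not_eq_dens (s := (univ : Finset Ω)) P
  rw [dens_univ] at h
  rw [Nat.card_eq_fintype_card, Fintype.card_subtype, ← nnratCast_dens, eq_sub_iff_add_eq]
  exact_mod_cast h

theorem sum_offDiag_insert_le {α : Type*} [DecidableEq α] {t : Finset α} {a : α} (ha : a ∉ t)
    {f : α × α → ℝ} {r s : ℝ} (hl : ∀ x ∈ t, f (a, x) ≤ r) (hr : ∀ x ∈ t, f (x, a) ≤ r)
    (ht : ∀ z ∈ t.offDiag, f z ≤ s) :
    ∑ z ∈ (insert a t).offDiag, f z ≤ #t * ((#t - 1) * s + 2 * r) := by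
  have card_offDiag : (#t.offDiag : ℝ) = #t * (#t - 1) := by
    rw [offDiag_card, Nat.cast_sub (Nat.le_mul_self _)]
    push_cast
    ring
  have sum_left : ∑ z ∈ {a} ×ˢ t, f z ≤ #t * r := by
    simpa [sum_product] using sum_le_card_nsmul t _ r hl
  have sum_right : ∑ z ∈ t ×ˢ {a}, f z ≤ #t * r := by
    simpa [sum_product] using sum_le_card_nsmul t _ r hr
  have sum_offDiag : ∑ z ∈ t.offDiag, f z ≤ #t * (#t - 1) * s := by
    simpa only [nsmul_eq_mul, card_offDiag] using sum_le_card_nsmul t.offDiag f s ht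
  rw [offDiag_insert ha, sum_union (by grind [disjoint_left]), sum_union (by grind [disjoint_left])]
  linarith

end UniformProbability

section Rounding

theorem mul_div_eq_iff_mem_Ico_ceilDiv {q p : ℕ} (hq : 0 < q) (hp : 0 < p) (n c : ℕ) :
    n * p / q = c ↔ n ∈ Ico (c * q ⌈/⌉ p) ((c + 1) * q ⌈/⌉ p) := by
  rw [mem_Ico, ceilDiv_le_iff_le_mul hp, ← not_le (a := _ ⌈/⌉ _), ceilDiv_le_iff_le_mul hp, not_le,
    mul_comm p n, ← Nat.div_lt_iff_lt_mul hq, ← Nat.le_div_iff_mul_le hq]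
  omega

theorem ceilDiv_add_div_le_ceilDiv_add {p : ℕ} (hp : 0 < p) (z q : ℕ) :
    z ⌈/⌉ p + q / p ≤ (z + q) ⌈/⌉ p := by
  have h : z + q ≤ p * ((z + q) ⌈/⌉ p) := le_smul_ceilDiv hp
  have hq : p * (q / p) ≤ q := Nat.mul_div_le q p
  refine Nat.add_le_of_le_sub ?_ ((ceilDiv_le_iff_le_mul hp).2 ?_)
  · exact Nat.le_of_mul_le_mul_left (by omega) hp
  · rw [Nat.mul_sub]
    omega

theorem ceilDiv_add_le_ceilDiv_add_div_add_one {p : ℕ} (hp : 0 < p) (z q : ℕ) :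
    (z + q) ⌈/⌉ p ≤ z ⌈/⌉ p + (q / p + 1) := by
  have hz : z ≤ p * (z ⌈/⌉ p) := le_smul_ceilDiv hp
  have hq : q < p * (q / p + 1) := Nat.lt_mul_div_succ q hp
  rw [ceilDiv_le_iff_le_mul hp, mul_add]
  omega

variable {q p : ℕ} [NeZero q] [NeZero p]

theorem sround_eq_iff (x : ZMod q) (c : ZMod p) :
    sround q p x = c ↔ (x + (q / p / 2 : ℕ)).val * p / q = c.val := by
  have shift_val : (x.val + q / p / 2) % q = (x + (q / p / 2 : ℕ)).val := by
    rw [ZMod.val_add, ZMod.val_natCast, Nat.add_mod_mod]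
  have quotient_lt : (x + (q / p / 2 : ℕ)).val * p / q < p := by
    rw [Nat.div_lt_iff_lt_mul (NeZero.pos q), mul_comm]
    exact Nat.mul_lt_mul_of_pos_left (ZMod.val_lt _) (NeZero.pos p)
  rw [sround, shift_val, ← (ZMod.val_injective p).eq_iff, ZMod.val_natCast_of_lt quotient_lt]

/-- The rounding bin of `c ∈ ℤ_p`: the residues in `ℤ_q` that the shifted rounding sends to `c`. -/
def roundingBin (q : ℕ) {p : ℕ} [NeZero q] (c : ZMod p) : Finset (ZMod q) :=
  {x | sround q p x = c}

theorem card_roundingBin (c : ZMod p) :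
    #(roundingBin q c) = (c.val * q + q) ⌈/⌉ p - c.val * q ⌈/⌉ p := by
  have val_mem (y : ZMod q) :
      y.val * p / q = c.val ↔ y.val ∈ Ico (c.val * q ⌈/⌉ p) ((c.val + 1) * q ⌈/⌉ p) :=
    mul_div_eq_iff_mem_Ico_ceilDiv (NeZero.pos q) (NeZero.pos p) _ _
  have lt_of_mem_Ico {n : ℕ} (hn : n ∈ Ico (c.val * q ⌈/⌉ p) ((c.val + 1) * q ⌈/⌉ p)) : n < q := by
    refine (mem_Ico.1 hn).2.trans_le ((ceilDiv_le_iff_le_mul (NeZero.pos p)).2 ?_)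
    exact Nat.mul_le_mul_right q (ZMod.val_lt c)
  calc
    #(roundingBin q c) = #{y : ZMod q | y.val * p / q = c.val} :=
      card_equiv (Equiv.addRight ((q / p / 2 : ℕ) : ZMod q)) fun x ↦ by
        simp [roundingBin, sround_eq_iff]
    _ = #(Ico (c.val * q ⌈/⌉ p) ((c.val + 1) * q ⌈/⌉ p)) := by
      refine card_nbij ZMod.val (fun y hy ↦ (val_mem y).1 (by simpa using hy))
        (ZMod.val_injective q).injOn fun n hn ↦ ⟨n, ?_, ZMod.val_natCast_of_lt (lt_of_mem_Ico hn)⟩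
      simpa [val_mem, ZMod.val_natCast_of_lt (lt_of_mem_Ico hn)] using hn
    _ = (c.val * q + q) ⌈/⌉ p - c.val * q ⌈/⌉ p := by rw [Nat.card_Ico, Nat.succ_mul]

theorem div_le_card_roundingBin (c : ZMod p) : q / p ≤ #(roundingBin q c) := by
  rw [card_roundingBin]
  exact Nat.le_sub_of_add_le' (ceilDiv_add_div_le_ceilDiv_add (NeZero.pos p) _ q)

theorem card_roundingBin_le (c : ZMod p) : #(roundingBin q c) ≤ q / p + 1 := by
  rw [card_roundingBin]
  exact Nat.sub_le_iff_le_add'.2 (ceilDiv_add_le_ceilDiv_add_div_add_one (NeZero.pos p) _ q)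

theorem sum_card_roundingBin : ∑ c : ZMod p, #(roundingBin q c) = q := by
  simpa [roundingBin] using sum_card_fiberwise_eq_card_filter univ univ (sround q p)

theorem dens_roundingBin_le (c : ZMod p) :
    ((roundingBin q c).dens : ℝ) ≤ 1 / p + 1 / q := by
  have hq : (q : ℝ) ≠ 0 := NeZero.ne _
  calc
    ((roundingBin q c).dens : ℝ) = #(roundingBin q c) / q := by rw [nnratCast_dens, ZMod.card]
    _ ≤ ((q / p : ℕ) + 1) / q := by
      gcongr
      exact_mod_cast card_roundingBin_le c
    _ ≤ (q / p + 1) / q := by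
      gcongr
      exact Nat.cast_div_le
    _ = 1 / p + 1 / q := by field_simp

end Rounding

section Collisions

theorem sum_sq_add_of_mem_pair {ι : Type*} (s : Finset ι) {b : ι → ℕ} {k : ℕ}
    (hb : ∀ i ∈ s, b i = k ∨ b i = k + 1) :
    ∑ i ∈ s, b i ^ 2 + #s * (k * (k + 1)) = (2 * k + 1) * ∑ i ∈ s, b i := by
  rw [← smul_eq_mul (#s), ← sum_const, ← sum_add_distrib, mul_sum]
  refine sum_congr rfl fun i hi ↦ ?_
  obtain h | h := hb i hi <;> rw [h] <;> ring

theorem card_filter_apply_eq_apply {α β : Type*} [Fintype α] [Fintype β] [DecidableEq β]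
    (f : α → β) : #{z : α × α | f z.1 = f z.2} = ∑ c, #{x | f x = c} ^ 2 := by
  rw [card_eq_sum_card_fiberwise (t := univ) (f := fun z ↦ f z.1) (by simp [Set.MapsTo])]
  refine sum_congr rfl fun c _ ↦ ?_
  rw [sq, ← card_product]
  congr 1
  ext ⟨x, y⟩
  simp only [mem_filter, mem_univ, true_and, mem_product]
  grind

variable {q p : ℕ} [NeZero q]

/-- The pairs of residues in `ℤ_q` that the shifted rounding to `ℤ_p` does not separate; their
density is the collision probability of two independent uniform residues. -/
def sroundCollisions (q p : ℕ) [NeZero q] : Finset (ZMod q × ZMod q) :=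
  {z | sround q p z.1 = sround q p z.2}

theorem dens_sroundCollisions :
    ((sroundCollisions q p).dens : ℝ) = #(sroundCollisions q p) / (q : ℝ) ^ 2 := by
  rw [nnratCast_dens, Fintype.card_prod, ZMod.card, ← sq, Nat.cast_pow]

theorem card_sroundCollisions [NeZero p] :
    #(sroundCollisions q p) = ∑ c : ZMod p, #(roundingBin q c) ^ 2 :=
  card_filter_apply_eq_apply (sround q p)

theorem card_sroundCollisions_add [NeZero p] :
    #(sroundCollisions q p) + p * (q / p * (q / p + 1)) = (2 * (q / p) + 1) * q := by
  have card_bin (c : ZMod p) :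
      #(roundingBin q c) = q / p ∨ #(roundingBin q c) = q / p + 1 := by
    have := div_le_card_roundingBin (q := q) c
    have := card_roundingBin_le (q := q) c
    omega
  have h := sum_sq_add_of_mem_pair univ fun c _ ↦ card_bin c
  rwa [sum_card_roundingBin, card_univ, ZMod.card, ← card_sroundCollisions] at h

theorem dens_sroundCollisions_le [NeZero p] :
    ((sroundCollisions q p).dens : ℝ) ≤ 1 / p + 1 / q := by
  have dens_bin (c : ZMod p) : ((roundingBin q c).dens : ℝ) = #(roundingBin q c) / q := by
    rw [nnratCast_dens, ZMod.card]
  have sum_dens_bin : ∑ c : ZMod p, ((roundingBin q c).dens : ℝ) = 1 := by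
    simp only [dens_bin, ← sum_div, ← Nat.cast_sum, sum_card_roundingBin]
    exact div_self (NeZero.ne _)
  calc
    ((sroundCollisions q p).dens : ℝ) = ∑ c : ZMod p, ((roundingBin q c).dens : ℝ) ^ 2 := by
      simp only [dens_sroundCollisions, card_sroundCollisions, Nat.cast_sum, Nat.cast_pow, sum_div,
        dens_bin, div_pow]
    _ ≤ ∑ c : ZMod p, (1 / p + 1 / q) * ((roundingBin q c).dens : ℝ) := by
      refine sum_le_sum fun c _ ↦ ?_
      rw [sq]
      gcongr
      exact dens_roundingBin_le c
    _ = 1 / p + 1 / q := by rw [← mul_sum, sum_dens_bin, mul_one]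

theorem dens_sroundCollisions_le_one_div_sub_one (hp : 2 ≤ p) (hbins : p ≤ (2 * (q / p) + 1) ^ 2) :
    ((sroundCollisions q p).dens : ℝ) ≤ 1 / (p - 1) := by
  have : NeZero p := ⟨by omega⟩
  have hp' : (0 : ℝ) < p - 1 := by
    have : (2 : ℝ) ≤ p := by exact_mod_cast hp
    linarith
  have hbins' : (0 : ℝ) ≤ (2 * (q / p : ℕ) + 1) ^ 2 - p := by
    rw [sub_nonneg]
    exact_mod_cast hbins
  have card_add : (#(sroundCollisions q p) : ℝ) + p * ((q / p : ℕ) * ((q / p : ℕ) + 1)) =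
      (2 * (q / p : ℕ) + 1) * q := by
    exact_mod_cast card_sroundCollisions_add (q := q) (p := p)
  have hq : (0 : ℝ) < (q : ℝ) ^ 2 := pow_pos (Nat.cast_pos.2 (NeZero.pos q)) 2
  rw [dens_sroundCollisions, div_le_div_iff₀ hq hp', one_mul]
  set k : ℝ := ((q / p : ℕ) : ℝ)
  have complete_square : 4 * ((q : ℝ) ^ 2 - #(sroundCollisions q p) * (p - 1)) =
      (2 * q - (p - 1) * (2 * k + 1)) ^ 2 + (p - 1) * ((2 * k + 1) ^ 2 - p) := by
    rw [eq_sub_of_add_eq card_add]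
    ring
  have := mul_nonneg hp'.le hbins'
  linarith [sq_nonneg (2 * q - (p - 1) * (2 * k + 1))]

end Collisions

section Rows

variable {κ : Type*}

/-- A bit string viewed as a 0/1 vector over `R`, as in the product `A·x` of the hash function. -/
def boolVec (R : Type*) [Zero R] [One R] (x : κ → Bool) : κ → R :=
  fun j ↦ if x j then 1 else 0

theorem boolVec_bot (R : Type*) [Zero R] [One R] : boolVec R (⊥ : κ → Bool) = 0 := by
  ext j
  simp [boolVec]

theorem exists_eq_true_of_ne_bot {x : κ → Bool} (hx : x ≠ ⊥) : ∃ j, x j = true := by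
  simpa using Function.ne_iff.1 hx

variable [Fintype κ]

theorem exists_dotProduct_boolVec_eq_and_eq {R : Type*} [Ring R] {x y : κ → Bool} {j k : κ}
    (hxj : x j = true) (hyj : y j = false) (hyk : y k = true) (s t : R) :
    ∃ a, a ⬝ᵥ boolVec R x = s ∧ a ⬝ᵥ boolVec R y = t := by
  classical
  exact ⟨Pi.single k t + Pi.single j (s - t * boolVec R x k), by
    simp [add_dotProduct, boolVec, hxj, hyj, hyk]⟩

theorem exists_dotProduct_boolVec_eq_and_eq_of_ne {R : Type*} [Ring R] {x y : κ → Bool}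
    (hxy : x ≠ y) (hx : x ≠ ⊥) (hy : y ≠ ⊥) (s t : R) :
    ∃ a, a ⬝ᵥ boolVec R x = s ∧ a ⬝ᵥ boolVec R y = t := by
  obtain ⟨i, hxi⟩ := exists_eq_true_of_ne_bot hx
  obtain ⟨k, hyk⟩ := exists_eq_true_of_ne_bot hy
  obtain ⟨j, hj⟩ := Function.ne_iff.1 hxy
  cases hxj : x j
  · have hyj : y j = true := by simpa [hxj] using hj.symm
    obtain ⟨a, hay, hax⟩ := exists_dotProduct_boolVec_eq_and_eq hyj hxj hxi t s
    exact ⟨a, hax, hay⟩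
  · have hyj : y j = false := by simpa [hxj] using hj.symm
    exact exists_dotProduct_boolVec_eq_and_eq hxj hyj hyk s t

variable [DecidableEq κ] {q p : ℕ} [NeZero q]

/-- The rows `a` on which the bit strings `x` and `y` collide, that is, for which `a·x` and `a·y`
round to the same residue in `ℤ_p`. -/
def rowCollisions (q p : ℕ) [NeZero q] (x y : κ → Bool) : Finset (κ → ZMod q) :=
  {a | sround q p (a ⬝ᵥ boolVec _ x) = sround q p (a ⬝ᵥ boolVec _ y)}

theorem rowCollisions_comm (x y : κ → Bool) : rowCollisions q p x y = rowCollisions q p y x := by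
  simp only [rowCollisions, eq_comm]

theorem dens_rowCollisions_bot {x : κ → Bool} (hx : x ≠ ⊥) :
    (rowCollisions q p x ⊥).dens = (roundingBin q (sround q p 0)).dens := by
  let dotHom : (κ → ZMod q) →+ ZMod q :=
    .mk' (· ⬝ᵥ boolVec _ x) fun a b ↦ add_dotProduct a b _
  have dotHom_surjective : Function.Surjective dotHom := fun s ↦ by
    obtain ⟨j, hj⟩ := exists_eq_true_of_ne_bot hx
    exact ⟨Pi.single j s, by simp [dotHom, boolVec, hj]⟩
  simp only [rowCollisions, boolVec_bot, dotProduct_zero]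
  exact dens_filter_comp_of_surjective dotHom dotHom_surjective (sround q p · = sround q p 0)

theorem dens_rowCollisions_of_ne_bot {x y : κ → Bool} (hxy : x ≠ y) (hx : x ≠ ⊥) (hy : y ≠ ⊥) :
    (rowCollisions q p x y).dens = (sroundCollisions q p).dens := by
  let dotPairHom : (κ → ZMod q) →+ ZMod q × ZMod q :=
    .mk' (fun a ↦ (a ⬝ᵥ boolVec _ x, a ⬝ᵥ boolVec _ y)) fun a b ↦ by simp [add_dotProduct]
  have dotPairHom_surjective : Function.Surjective dotPairHom := fun ⟨s, t⟩ ↦ by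
    simpa [dotPairHom] using exists_dotProduct_boolVec_eq_and_eq_of_ne hxy hx hy s t
  exact dens_filter_comp_of_surjective dotPairHom dotPairHom_surjective
    fun z ↦ sround q p z.1 = sround q p z.2

theorem dens_rowCollisions_le [NeZero p] {x y : κ → Bool} (hxy : x ≠ y) :
    ((rowCollisions q p x y).dens : ℝ) ≤ 1 / p + 1 / q := by
  rcases eq_or_ne x ⊥ with rfl | hx
  · rw [rowCollisions_comm, dens_rowCollisions_bot hxy.symm]
    exact dens_roundingBin_le _
  rcases eq_or_ne y ⊥ with rfl | hy
  · rw [dens_rowCollisions_bot hx]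
    exact dens_roundingBin_le _
  · rw [dens_rowCollisions_of_ne_bot hxy hx hy]
    exact dens_sroundCollisions_le

theorem sum_dens_rowCollisions_pow_le (hp : 2 ≤ p) (hbins : p ≤ (2 * (q / p) + 1) ^ 2) (n : ℕ) :
    ∑ z ∈ (univ : Finset (κ → Bool)).offDiag, ((rowCollisions q p z.1 z.2).dens : ℝ) ^ n ≤
      (2 ^ Fintype.card κ - 1) *
        ((2 ^ Fintype.card κ - 2) * (1 / (p - 1)) ^ n + 2 * (1 / p + 1 / q) ^ n) := by
  have : NeZero p := ⟨by omega⟩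
  have card_ne_bot : (#((univ : Finset (κ → Bool)).erase ⊥) : ℝ) = 2 ^ Fintype.card κ - 1 := by
    simp [card_erase_of_mem]
  have row_le {x y : κ → Bool} (hxy : x ≠ y) :
      ((rowCollisions q p x y).dens : ℝ) ^ n ≤ (1 / p + 1 / q) ^ n := by
    gcongr
    exact dens_rowCollisions_le hxy
  have h := sum_offDiag_insert_le (notMem_erase (⊥ : κ → Bool) univ)
    (f := fun z ↦ ((rowCollisions q p z.1 z.2).dens : ℝ) ^ n)
    (fun x hx ↦ row_le (ne_of_mem_erase hx).symm) (fun x hx ↦ row_le (ne_of_mem_erase hx))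
    (s := (1 / (p - 1)) ^ n) fun z hz ↦ by
      obtain ⟨hx, hy, hxy⟩ := mem_offDiag.1 hz
      rw [dens_rowCollisions_of_ne_bot hxy (ne_of_mem_erase hx) (ne_of_mem_erase hy)]
      gcongr
      exact dens_sroundCollisions_le_one_div_sub_one hp hbins
  rw [insert_erase (mem_univ _), card_ne_bot] at h
  convert h using 3
  ring

end Rows

section Estimates

theorem three_halves_pow_le (n : ℕ) : (3 / 2 : ℝ) ^ n ≤ (1 + 2 ^ n) / 2 :=
  calc
    (3 / 2 : ℝ) ^ n = (1 / 2 * 1 + 1 / 2 * 2) ^ n := by norm_num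
    _ ≤ 1 / 2 * 1 ^ n + 1 / 2 * 2 ^ n :=
      (convexOn_pow n).right (Set.mem_Ici.2 zero_le_one) (Set.mem_Ici.2 zero_le_two) (by norm_num)
        (by norm_num) (by norm_num)
    _ = (1 + 2 ^ n) / 2 := by
      rw [one_pow]
      ring

theorem one_div_add_one_div_pow_le {p q n m : ℕ} (hnm : n ≤ m) (hp : 2 ≤ p) (hpq : 2 * p ≤ q) :
    (1 / p + 1 / q : ℝ) ^ n ≤ (1 + 2 ^ m) / 2 * (1 / (p - 1)) ^ n := by
  have hp' : (2 : ℝ) ≤ p := by exact_mod_cast hp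
  have hpq' : (2 * p : ℝ) ≤ q := by exact_mod_cast hpq
  have ratio_le : (1 / p + 1 / q : ℝ) ≤ 3 / 2 * (1 / (p - 1)) :=
    calc
      (1 / p + 1 / q : ℝ) ≤ 1 / p + 1 / (2 * p) := by gcongr
      _ = 3 / 2 * (1 / p) := by ring
      _ ≤ 3 / 2 * (1 / (p - 1)) := by
        gcongr <;> linarith
  have inv_nonneg : (0 : ℝ) ≤ 1 / (p - 1) := one_div_nonneg.2 (by linarith)
  calc
    (1 / p + 1 / q : ℝ) ^ n ≤ (3 / 2 * (1 / (p - 1))) ^ n := by gcongr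
    _ = (3 / 2) ^ n * (1 / (p - 1)) ^ n := mul_pow _ _ _
    _ ≤ (3 / 2) ^ m * (1 / (p - 1)) ^ n := by
      gcongr
      norm_num
    _ ≤ (1 + 2 ^ m) / 2 * (1 / (p - 1)) ^ n := by
      gcongr
      exact three_halves_pow_le m

theorem offDiag_weight_le {N r s : ℝ} (hN : 1 ≤ N) (hs : 0 ≤ s) (hr : r ≤ (1 + N) / 2 * s) :
    (N - 1) * ((N - 2) * s + 2 * r) ≤ 2 * (N ^ 2 * s) :=
  calc
    (N - 1) * ((N - 2) * s + 2 * r) ≤ (N - 1) * ((N - 2) * s + 2 * ((1 + N) / 2 * s)) := by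
      gcongr
    _ = 2 * (N ^ 2 * s) - (3 * (N - 1) + 2) * s := by ring
    _ ≤ 2 * (N ^ 2 * s) := sub_le_self _ (mul_nonneg (by linarith) hs)

theorem two_pow_mul_one_div_seventeen_sub_one_pow (m : ℕ) :
    (2 : ℝ) ^ (2 * m) * (1 / (17 - 1)) ^ m = 2 ^ (-(2 * (m : ℤ))) := by
  rw [zpow_neg, zpow_mul, zpow_natCast, pow_mul, ← mul_pow, ← inv_pow]
  norm_num

end Estimates

section Hash

variable {ι κ : Type*} [Fintype ι] [DecidableEq ι] [Fintype κ] [DecidableEq κ] {q p : ℕ}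

/-- The hash function `h_A(x) = ⌊A·x⌋^s_p` for an arbitrary target modulus `p` and a matrix `A` of
arbitrary shape; `hfun` is the case `p = 17` of square matrices. -/
def roundedMulVec (p : ℕ) (A : Matrix ι κ (ZMod q)) (x : κ → Bool) : ι → ZMod p :=
  fun i ↦ sround q p ((A *ᵥ boolVec _ x) i)

theorem hfun_eq_roundedMulVec (q m : ℕ) [NeZero q] (A : Matrix (Fin m) (Fin m) (ZMod q)) :
    hfun q m A = roundedMulVec 17 A :=
  rfl

theorem dens_roundedMulVec_eq [NeZero q] (x y : κ → Bool) :
    ({A | roundedMulVec p A x = roundedMulVec p A y} : Finset (Matrix ι κ (ZMod q))).dens =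
      (rowCollisions q p x y).dens ^ Fintype.card ι := by
  simp only [funext_iff]
  exact dens_filter_forall_row fun a : κ → ZMod q ↦
    sround q p (a ⬝ᵥ boolVec _ x) = sround q p (a ⬝ᵥ boolVec _ y)

theorem two_mul_dens_not_injective_roundedMulVec_le [NeZero q] :
    2 * (({A | ¬ Function.Injective (roundedMulVec p A)} : Finset (Matrix ι κ (ZMod q))).dens : ℝ) ≤
      ∑ z ∈ (univ : Finset (κ → Bool)).offDiag,
        ((rowCollisions q p z.1 z.2).dens : ℝ) ^ Fintype.card ι := by
  have h := two_mul_dens_not_injective_le (roundedMulVec (ι := ι) (κ := κ) (q := q) p)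
  simp only [dens_roundedMulVec_eq] at h
  exact_mod_cast h

theorem dens_not_injective_roundedMulVec_le [NeZero q] [NeZero p] :
    (({A | ¬ Function.Injective (roundedMulVec p A)} : Finset (Matrix ι κ (ZMod q))).dens : ℝ) ≤
      2 ^ (2 * Fintype.card κ) * (1 / p + 1 / q) ^ Fintype.card ι := by
  have card_offDiag_le : #(univ : Finset (κ → Bool)).offDiag ≤ 2 ^ (2 * Fintype.card κ) := by
    refine (card_le_univ _).trans_eq ?_
    simp [two_mul, pow_add]
  have union_bound := calc
    2 * (({A | ¬ Function.Injective (roundedMulVec p A)} : Finset (Matrix ι κ (ZMod q))).dens : ℝ)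
      ≤ ∑ z ∈ (univ : Finset (κ → Bool)).offDiag,
          ((rowCollisions q p z.1 z.2).dens : ℝ) ^ Fintype.card ι :=
        two_mul_dens_not_injective_roundedMulVec_le
    _ ≤ ∑ _z ∈ (univ : Finset (κ → Bool)).offDiag,
          ((1 : ℝ) / p + 1 / q) ^ Fintype.card ι := by
        gcongr with z hz
        exact dens_rowCollisions_le (mem_offDiag.1 hz).2.2
    _ ≤ 2 ^ (2 * Fintype.card κ) * (1 / p + 1 / q) ^ Fintype.card ι := by
        rw [sum_const, nsmul_eq_mul]
        gcongr
        exact_mod_cast card_offDiag_le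
  linarith [NNRat.cast_nonneg (α := ℝ)
    ({A | ¬ Function.Injective (roundedMulVec p A)} : Finset (Matrix ι κ (ZMod q))).dens]

theorem dens_not_injective_roundedMulVec_le_of_le_sq [NeZero q]
    (hικ : Fintype.card ι ≤ Fintype.card κ) (hp : 2 ≤ p) (hpq : 2 * p ≤ q)
    (hbins : p ≤ (2 * (q / p) + 1) ^ 2) :
    (({A | ¬ Function.Injective (roundedMulVec p A)} : Finset (Matrix ι κ (ZMod q))).dens : ℝ) ≤
      2 ^ (2 * Fintype.card κ) * (1 / (p - 1)) ^ Fintype.card ι := by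
  have one_le_two_pow : (1 : ℝ) ≤ 2 ^ Fintype.card κ := one_le_pow₀ one_le_two
  have inv_nonneg : (0 : ℝ) ≤ 1 / (p - 1) := by
    have : (2 : ℝ) ≤ p := by exact_mod_cast hp
    exact one_div_nonneg.2 (by linarith)
  rw [pow_mul']
  refine le_of_mul_le_mul_left ?_ (zero_lt_two (α := ℝ))
  exact two_mul_dens_not_injective_roundedMulVec_le
    |>.trans (sum_dens_rowCollisions_pow_le hp hbins _)
    |>.trans (offDiag_weight_le one_le_two_pow (pow_nonneg inv_nonneg _)
      (one_div_add_one_div_pow_le hικ hp hpq))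

end Hash

theorem hfun_injective_whp_general {p q m n : ℕ} (hnm : n ≤ m) (hp : 2 ≤ p) (hpq : 2 * p ≤ q)
    (hbins : p ≤ (2 * (q / p) + 1) ^ 2) :
    1 - 2 ^ (2 * m) * (1 / p + 1 / q) ^ n ≤
      (Nat.card {A : Matrix (Fin n) (Fin m) (ZMod q) // Function.Injective (roundedMulVec p A)} : ℝ)
        / q ^ (n * m) ∧
    1 - 2 ^ (2 * m) * (1 / (p - 1)) ^ n ≤
      (Nat.card {A : Matrix (Fin n) (Fin m) (ZMod q) // Function.Injective (roundedMulVec p A)} : ℝ)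
        / q ^ (n * m) := by
  have : NeZero p := ⟨by omega⟩
  have : NeZero q := ⟨by omega⟩
  have card_matrix : (Fintype.card (Matrix (Fin n) (Fin m) (ZMod q)) : ℝ) = q ^ (n * m) := by
    rw [Fintype.card_congr (Matrix.of (m := Fin n) (n := Fin m) (α := ZMod q)).symm, mul_comm n]
    simp [pow_mul]
  rw [← card_matrix, natCard_subtype_div_eq_one_sub_dens_not, sub_le_sub_iff_left,
    sub_le_sub_iff_left]
  constructor
  · simpa only [Fintype.card_fin] using
      dens_not_injective_roundedMulVec_le (ι := Fin n) (κ := Fin m) (q := q) (p := p)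
  · simpa only [Fintype.card_fin] using dens_not_injective_roundedMulVec_le_of_le_sq
      (ι := Fin n) (κ := Fin m) (by simpa only [Fintype.card_fin] using hnm) hp hpq hbins

/-- Lemma (rounding is injective w.h.p.): for `p = 17`, a prime `q ≥ 2p` and `m ≥ 1`,
a uniformly random `A ∈ ℤ_q^{m×m}` yields an injective `h_A` with probability at least
`1 − 2^{2m}·(1/p + 1/q)^m`, and in particular at least `1 − 2^{−2m}`. -/
theorem hfun_injective_whp (q m : ℕ) (hq : q.Prime) (hq2 : 34 ≤ q) (hm : 1 ≤ m) [NeZero q] :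
    (1 : ℝ) - 2 ^ (2 * m) * (1 / 17 + 1 / q) ^ m
      ≤ (Nat.card {A : Matrix (Fin m) (Fin m) (ZMod q) // Function.Injective (hfun q m A)} : ℝ)
          / (q ^ (m * m)) ∧
    (1 : ℝ) - (2 : ℝ) ^ (-(2 * (m : ℤ)))
      ≤ (Nat.card {A : Matrix (Fin m) (Fin m) (ZMod q) // Function.Injective (hfun q m A)} : ℝ)
          / (q ^ (m * m)) := by
  have bins : 17 ≤ (2 * (q / 17) + 1) ^ 2 :=
    le_trans (by norm_num) (Nat.pow_le_pow_left (by omega : 5 ≤ 2 * (q / 17) + 1) 2)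
  simpa only [hfun_eq_roundedMulVec, Nat.cast_ofNat, two_pow_mul_one_div_seventeen_sub_one_pow]
    using hfun_injective_whp_general (le_refl m) (by norm_num) hq2 bins
end

section
/- Let ρ and σ be density matrices on a finite-dimensional bipartite Hilbert space H_A ⊗ H_B with ½‖ρ − σ‖₁ ≤ ε ≤ 1. Then |S(ρ_A) − S(σ_A)| ≤ 2ε·log d_A + (1+ε)·h(ε/(1+ε)), where d_A = dim H_A, S is the von Neumann entropy, ρ_A, σ_A are the reduced states on A, and h is the binary entropy function. -/
open scoped BigOperators ComplexOrder

/-- Trace norm of a Hermitian matrix: sum of absolute values of eigenvalues. -/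
noncomputable def trNorm {d : Type*} [Fintype d] [DecidableEq d] (M : Matrix d d ℂ) : ℝ :=
  if h : M.IsHermitian then ∑ i, |h.eigenvalues i| else 0

/-- Binary entropy function `h(x) = −x log x − (1−x) log(1−x)`. -/
noncomputable def binEnt (x : ℝ) : ℝ := Real.negMulLog x + Real.negMulLog (1 - x)

/-!
Write `D = ρ - σ`. The operator `C = ρ + D⁻ = σ + D⁺` dominates both `ρ` and `σ`, and its trace
exceeds theirs by only `δ = ½‖ρ - σ‖₁`. The partial trace preserves these relations, so by Weyl's
monotonicity the decreasingly ordered spectra `p`, `q` of `ρ_A`, `σ_A` are both dominated entrywise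
by the spectrum `c` of `C_A`.

It remains to compare `H p = ∑ i, -p i log (p i)` with `H q`. The unnormalised entropy
`H p + (∑ p) log (∑ p)` is monotone in `p`, so `H p ≤ H c + (1 + δ) log (1 + δ)`. Subadditivity
gives `H c ≤ H q + H (c - q)`, and Jensen's inequality gives `H (c - q) ≤ δ log d_A - δ log δ`. The
terms free of `d_A` sum to `(1 + δ) h(δ / (1 + δ))`, which is nondecreasing in `δ`.
-/

open Real (negMulLog)

section ClassicalEntropy

lemma negMulLog_add_le {x y : ℝ} (hx : 0 ≤ x) (hy : 0 ≤ y) :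
    negMulLog (x + y) ≤ negMulLog x + negMulLog y := by
  have mul_log_le {u v : ℝ} (hu : 0 ≤ u) (hv : 0 ≤ v) :
      u * Real.log u ≤ u * Real.log (u + v) := by
    rcases hu.eq_or_lt with rfl | hu
    · simp
    · gcongr
      exact le_add_of_nonneg_right hv
  have hxy := mul_log_le hx hy
  have hyx := mul_log_le hy hx
  rw [add_comm y x] at hyx
  simp only [negMulLog]
  linarith

/-- Monotonicity of `x log (1 + r / x)` in both `x` and `r`, in a form free of division. -/
lemma negMulLog_add_mul_log_le {x x' r r' : ℝ} (hx : 0 ≤ x) (hxx' : x ≤ x') (hr : 0 ≤ r)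
    (hrr' : r ≤ r') :
    negMulLog x + x * Real.log (x + r) ≤ negMulLog x' + x' * Real.log (x' + r') := by
  have mul_log_one_add {y s : ℝ} (hy : 0 < y) (hs : 0 ≤ s) :
      y * Real.log (1 + s / y) = negMulLog y + y * Real.log (y + s) := by
    rw [one_add_div hy.ne', Real.log_div (by positivity) hy.ne', negMulLog]
    ring
  have hr' : 0 ≤ r' := hr.trans hrr'
  rcases hxx'.eq_or_lt with rfl | hlt
  · rcases hx.eq_or_lt with rfl | hx
    · simp
    · gcongr
  have hx' : 0 < x' := hx.trans_lt hlt
  rw [← mul_log_one_add hx' hr']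
  rcases hx.eq_or_lt with rfl | hx
  · simpa using mul_nonneg hx'.le (Real.log_nonneg (le_add_of_nonneg_right (by positivity)))
  have bernoulli : 1 + r' / x ≤ (1 + r' / x') ^ (x' / x) := by
    have h := one_add_mul_self_le_rpow_one_add (s := r' / x') (p := x' / x)
      (by linarith [div_nonneg hr' hx'.le]) ((one_le_div hx).2 hxx')
    rwa [div_mul_div_comm, mul_comm x, mul_div_mul_left _ _ hx'.ne'] at h
  rw [← mul_log_one_add hx hr]
  calc x * Real.log (1 + r / x) ≤ x * Real.log ((1 + r' / x') ^ (x' / x)) := by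
        gcongr
        exact le_trans (by gcongr) bernoulli
    _ = x' * Real.log (1 + r' / x') := by
        rw [Real.log_rpow (by positivity), ← mul_assoc, mul_div_cancel₀ _ hx.ne']

lemma add_mul_binEnt_div_add {x y : ℝ} (hx : 0 ≤ x) (hy : 0 ≤ y) :
    (x + y) * binEnt (x / (x + y)) = negMulLog x + negMulLog y - negMulLog (x + y) := by
  rcases (add_nonneg hx hy).eq_or_lt' with h | h
  · obtain ⟨rfl, rfl⟩ := (add_eq_zero_iff_of_nonneg hx hy).1 h
    simp
  have hxm := Real.negMulLog_mul (x + y) (x / (x + y))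
  have hym := Real.negMulLog_mul (x + y) (y / (x + y))
  rw [mul_div_cancel₀ _ h.ne'] at hxm hym
  have hsum : x / (x + y) + y / (x + y) = 1 := by rw [← add_div, div_self h.ne']
  rw [binEnt, ← eq_sub_of_add_eq' hsum, hxm, hym]
  linear_combination -negMulLog (x + y) * hsum

variable {ι : Type*} [Fintype ι]

lemma sum_negMulLog_sub_negMulLog_sum_mono {p c : ι → ℝ} (hp : ∀ i, 0 ≤ p i)
    (hpc : ∀ i, p i ≤ c i) :
    ∑ i, negMulLog (p i) - negMulLog (∑ i, p i)
      ≤ ∑ i, negMulLog (c i) - negMulLog (∑ i, c i) := by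
  have sum_sub (f : ι → ℝ) : ∑ i, negMulLog (f i) - negMulLog (∑ i, f i)
      = ∑ i, (negMulLog (f i) + f i * Real.log (f i + (∑ j, f j - f i))) := by
    simp only [add_sub_cancel, Finset.sum_add_distrib, ← Finset.sum_mul]
    rw [negMulLog, neg_mul, sub_neg_eq_add]
  rw [sum_sub, sum_sub]
  refine Finset.sum_le_sum fun i hi ↦ negMulLog_add_mul_log_le (hp i) (hpc i)
    (sub_nonneg.2 (Finset.single_le_sum (fun j _ ↦ hp j) hi)) ?_
  have hle : c i - p i ≤ ∑ j, (c j - p j) :=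
    Finset.single_le_sum (f := fun j ↦ c j - p j) (fun j _ ↦ sub_nonneg.2 (hpc j)) hi
  rw [Finset.sum_sub_distrib] at hle
  linarith

lemma add_mul_binEnt_div_add_mono {x x' y y' : ℝ} (hx : 0 ≤ x) (hxx' : x ≤ x') (hy : 0 ≤ y)
    (hyy' : y ≤ y') :
    (x + y) * binEnt (x / (x + y)) ≤ (x' + y') * binEnt (x' / (x' + y')) := by
  rw [add_mul_binEnt_div_add hx hy, add_mul_binEnt_div_add (hx.trans hxx') (hy.trans hyy')]
  simpa [Fin.sum_univ_two] using
    sum_negMulLog_sub_negMulLog_sum_mono (p := ![x, y]) (c := ![x', y'])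
      (Fin.forall_fin_two.2 ⟨hx, hy⟩) (Fin.forall_fin_two.2 ⟨hxx', hyy'⟩)

lemma sum_negMulLog_le {m : ι → ℝ} (hm : ∀ i, 0 ≤ m i) :
    ∑ i, negMulLog (m i)
      ≤ (∑ i, m i) * Real.log (Fintype.card ι) + negMulLog (∑ i, m i) := by
  rcases isEmpty_or_nonempty ι with _ | _
  · simp
  set d : ℝ := (Fintype.card ι : ℝ)
  have hd : 0 < d := by simp [d, Fintype.card_pos]
  have jensen : d⁻¹ * ∑ i, negMulLog (m i) ≤ negMulLog (d⁻¹ * ∑ i, m i) := by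
    simpa only [smul_eq_mul, ← Finset.mul_sum] using
      Real.concaveOn_negMulLog.le_map_sum (t := Finset.univ) (w := fun _ ↦ d⁻¹) (p := m)
        (fun _ _ ↦ by positivity) (by simp [d]) (fun i _ ↦ hm i)
  rw [Real.negMulLog_mul, negMulLog, Real.log_inv] at jensen
  have scaled := mul_le_mul_of_nonneg_left jensen hd.le
  field_simp at scaled
  linarith

theorem sum_negMulLog_sub_sum_negMulLog_le {p q c : ι → ℝ} {δ : ℝ} (hp : ∀ i, 0 ≤ p i)
    (hq : ∀ i, 0 ≤ q i) (hpc : ∀ i, p i ≤ c i) (hqc : ∀ i, q i ≤ c i)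
    (hpq : ∑ i, p i = ∑ i, q i) (hc : ∑ i, c i = δ + ∑ i, p i) :
    ∑ i, negMulLog (p i) - ∑ i, negMulLog (q i)
      ≤ δ * Real.log (Fintype.card ι) + (δ + ∑ i, p i) * binEnt (δ / (δ + ∑ i, p i)) := by
  have hδ : ∑ i, (c i - q i) = δ := by rw [Finset.sum_sub_distrib, hc, hpq, add_sub_cancel_right]
  have hδ0 : 0 ≤ δ := hδ ▸ Finset.sum_nonneg fun i _ ↦ sub_nonneg.2 (hqc i)
  have hmono := sum_negMulLog_sub_negMulLog_sum_mono hp hpc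
  have hsub : ∑ i, negMulLog (c i) ≤ ∑ i, negMulLog (q i) + ∑ i, negMulLog (c i - q i) := by
    rw [← Finset.sum_add_distrib]
    refine Finset.sum_le_sum fun i _ ↦ ?_
    simpa using negMulLog_add_le (hq i) (sub_nonneg.2 (hqc i))
  have hmax := sum_negMulLog_le fun i ↦ sub_nonneg.2 (hqc i)
  rw [hδ] at hmax
  rw [hc] at hmono
  rw [add_mul_binEnt_div_add hδ0 (Finset.sum_nonneg fun i _ ↦ hp i)]
  linarith

end ClassicalEntropy

section EigenvalueMonotonicity

variable {𝕜 E : Type*} [RCLike 𝕜] [NormedAddCommGroup E] [InnerProductSpace 𝕜 E]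
  [FiniteDimensional 𝕜 E]

lemma exists_ne_zero_forall_inner_eq_zero {ι : Type*} [Fintype ι] (v : ι → E)
    (hcard : Fintype.card ι < Module.finrank 𝕜 E) :
    ∃ x : E, x ≠ 0 ∧ ∀ i, inner 𝕜 (v i) x = 0 := by
  let F : E →ₗ[𝕜] ι → 𝕜 := LinearMap.pi fun i ↦ (innerSL 𝕜 (v i)).toLinearMap
  have hker : LinearMap.ker F ≠ ⊥ :=
    LinearMap.ker_ne_bot_of_finrank_lt (by rwa [Module.finrank_fintype_fun_eq_card])
  obtain ⟨x, hx, hx0⟩ := Submodule.exists_mem_ne_zero_of_ne_bot hker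
  exact ⟨x, hx0, congr_fun (LinearMap.mem_ker.1 hx)⟩

variable {n : ℕ} {S T : E →ₗ[𝕜] E}

lemma re_inner_apply_self_eq_sum_eigenvalues (hn : Module.finrank 𝕜 E = n) (hS : S.IsSymmetric)
    (x : E) :
    RCLike.re (inner 𝕜 x (S x))
      = ∑ j, hS.eigenvalues hn j * ‖inner 𝕜 (hS.eigenvectorBasis hn j) x‖ ^ 2 := by
  rw [← (hS.eigenvectorBasis hn).sum_inner_mul_inner x (S x), map_sum]
  refine Finset.sum_congr rfl fun j _ ↦ ?_
  rw [← hS, hS.apply_eigenvectorBasis, inner_smul_left, RCLike.conj_ofReal, mul_left_comm,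
    RCLike.re_ofReal_mul, inner_mul_symm_re_eq_norm, norm_mul, norm_inner_symm, sq]

lemma eigenvalues_mul_norm_sq_le (hn : Module.finrank 𝕜 E = n) (hS : S.IsSymmetric) {i : Fin n}
    {x : E} (hx : ∀ j, i < j → inner 𝕜 (hS.eigenvectorBasis hn j) x = 0) :
    hS.eigenvalues hn i * ‖x‖ ^ 2 ≤ RCLike.re (inner 𝕜 x (S x)) := by
  rw [re_inner_apply_self_eq_sum_eigenvalues hn hS,
    ← (hS.eigenvectorBasis hn).sum_sq_norm_inner_right, Finset.mul_sum]
  refine Finset.sum_le_sum fun j _ ↦ ?_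
  rcases lt_or_ge i j with hij | hji
  · simp [hx j hij]
  · gcongr
    exact hS.eigenvalues_antitone hn hji

lemma re_inner_apply_self_le (hn : Module.finrank 𝕜 E = n) (hS : S.IsSymmetric) {i : Fin n}
    {x : E} (hx : ∀ j, j < i → inner 𝕜 (hS.eigenvectorBasis hn j) x = 0) :
    RCLike.re (inner 𝕜 x (S x)) ≤ hS.eigenvalues hn i * ‖x‖ ^ 2 := by
  rw [re_inner_apply_self_eq_sum_eigenvalues hn hS,
    ← (hS.eigenvectorBasis hn).sum_sq_norm_inner_right, Finset.mul_sum]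
  refine Finset.sum_le_sum fun j _ ↦ ?_
  rcases lt_or_ge j i with hji | hij
  · simp [hx j hji]
  · gcongr
    exact hS.eigenvalues_antitone hn hij

theorem isSymmetric_eigenvalues_mono (hn : Module.finrank 𝕜 E = n) (hS : S.IsSymmetric)
    (hT : T.IsSymmetric) (hST : S ≤ T) (i : Fin n) :
    hS.eigenvalues hn i ≤ hT.eigenvalues hn i := by
  obtain ⟨x, hx0, hx⟩ := exists_ne_zero_forall_inner_eq_zero (𝕜 := 𝕜)
    (fun j : {j // j ≠ i} ↦
      if i < j then hS.eigenvectorBasis hn j else hT.eigenvectorBasis hn j)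
    (by simp [Fintype.card_subtype_compl, hn, i.pos])
  have hSx (j) (hij : i < j) : inner 𝕜 (hS.eigenvectorBasis hn j) x = 0 := by
    simpa [hij] using hx ⟨j, hij.ne'⟩
  have hTx (j) (hji : j < i) : inner 𝕜 (hT.eigenvectorBasis hn j) x = 0 := by
    simpa [hji.not_gt] using hx ⟨j, hji.ne⟩
  have hle : RCLike.re (inner 𝕜 x (S x)) ≤ RCLike.re (inner 𝕜 x (T x)) := by
    simpa [inner_sub_right] using hST.re_inner_nonneg_right x
  refine le_of_mul_le_mul_right ?_ (show 0 < ‖x‖ ^ 2 by positivity)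
  exact (eigenvalues_mul_norm_sq_le hn hS hSx).trans <|
    hle.trans (re_inner_apply_self_le hn hT hTx)

end EigenvalueMonotonicity

section Matrices

open scoped MatrixOrder

lemma isHermitian_eigenvalues_mono {𝕜 d : Type*} [RCLike 𝕜] [Fintype d] [DecidableEq d]
    {X Y : Matrix d d 𝕜} (hX : X.IsHermitian) (hY : Y.IsHermitian) (hXY : X ≤ Y) (i : d) :
    hX.eigenvalues i ≤ hY.eigenvalues i :=
  isSymmetric_eigenvalues_mono _ _ _
    (by rwa [LinearMap.le_def, ← map_sub, Matrix.isPositive_toEuclideanLin_iff]) _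

lemma trace_cfc {𝕜 d : Type*} [RCLike 𝕜] [Fintype d] [DecidableEq d] {X : Matrix d d 𝕜}
    (hX : X.IsHermitian) (f : ℝ → ℝ) : (cfc f X).trace = ∑ i, (f (hX.eigenvalues i) : 𝕜) := by
  rw [hX.cfc_eq, Matrix.IsHermitian.cfc, Unitary.conjStarAlgAut_apply, Matrix.trace_mul_cycle,
    Unitary.coe_star_mul_self, one_mul, Matrix.trace_diagonal]
  rfl

variable {d : Type*} [Fintype d] [DecidableEq d]

lemma sum_eigenvalues {X : Matrix d d ℂ} (hX : X.IsHermitian) :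
    ∑ i, hX.eigenvalues i = X.trace.re := by
  simp [hX.trace_eq_sum_eigenvalues]

lemma trNorm_nonneg (X : Matrix d d ℂ) : 0 ≤ trNorm X := by
  unfold trNorm
  split_ifs <;> positivity

lemma trace_abs {X : Matrix d d ℂ} (hX : X.IsHermitian) : (CFC.abs X).trace = trNorm X := by
  rw [CFC.abs_eq_cfc_norm X hX, trace_cfc hX, trNorm, dif_pos hX]
  simp

lemma exists_common_upper_bound {X Y : Matrix d d ℂ} (hXY : (X - Y).IsHermitian) :
    ∃ C, X ≤ C ∧ Y ≤ C ∧ C.trace.re = (X.trace.re + Y.trace.re + trNorm (X - Y)) / 2 := by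
  refine ⟨X + (X - Y)⁻, le_add_of_nonneg_right (CFC.negPart_nonneg _), ?_, ?_⟩
  · have hC : X + (X - Y)⁻ = Y + (X - Y)⁺ := by
      rw [← sub_eq_iff_eq_add', add_sub_right_comm, ← eq_sub_iff_add_eq,
        CFC.posPart_sub_negPart (X - Y) hXY]
    exact hC ▸ le_add_of_nonneg_right (CFC.posPart_nonneg _)
  · have htr := congr_arg (fun M ↦ M.trace.re) (CFC.abs_sub_self (X - Y) hXY)
    simp only [two_nsmul, Matrix.trace_sub, Matrix.trace_add, trace_abs hXY, Complex.sub_re,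
      Complex.add_re, Complex.ofReal_re] at htr
    rw [Matrix.trace_add, Complex.add_re]
    linarith

lemma abs_vN_sub_vN_le {ρ σ C : Matrix d d ℂ} {δ : ℝ} (hρ : ρ.PosSemidef) (hσ : σ.PosSemidef)
    (hρC : ρ ≤ C) (hσC : σ ≤ C) (htr : ρ.trace = σ.trace) (hC : C.trace.re = δ + ρ.trace.re) :
    |vN ρ - vN σ| ≤ δ * Real.log (Fintype.card d)
      + (δ + ρ.trace.re) * binEnt (δ / (δ + ρ.trace.re)) := by
  have hCh : C.IsHermitian := (Matrix.nonneg_iff_posSemidef.1 (hρ.nonneg.trans hρC)).isHermitian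
  have hρle := isHermitian_eigenvalues_mono hρ.isHermitian hCh hρC
  have hσle := isHermitian_eigenvalues_mono hσ.isHermitian hCh hσC
  rw [vN, vN, dif_pos hρ.isHermitian, dif_pos hσ.isHermitian, abs_sub_le_iff]
  constructor
  · rw [← sum_eigenvalues hρ.isHermitian]
    exact sum_negMulLog_sub_sum_negMulLog_le hρ.eigenvalues_nonneg hσ.eigenvalues_nonneg hρle hσle
      (by simp [sum_eigenvalues, htr]) (by simp [sum_eigenvalues, hC])
  · rw [htr, ← sum_eigenvalues hσ.isHermitian]
    exact sum_negMulLog_sub_sum_negMulLog_le hσ.eigenvalues_nonneg hρ.eigenvalues_nonneg hσle hρle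
      (by simp [sum_eigenvalues, htr]) (by simp [sum_eigenvalues, hC, htr])

end Matrices

section PartialTrace

open scoped MatrixOrder

variable {A B : Type*} [Fintype B]

lemma ptraceB_eq_sum_submatrix (X : Matrix (A × B) (A × B) ℂ) :
    ptraceB X = ∑ b, X.submatrix (·, b) (·, b) := by
  ext a a'
  simp [ptraceB, Matrix.sum_apply]

lemma ptraceB_sub (X Y : Matrix (A × B) (A × B) ℂ) :
    ptraceB (X - Y) = ptraceB X - ptraceB Y := by
  simp [ptraceB_eq_sum_submatrix, Matrix.submatrix_sub]

lemma posSemidef_ptraceB {X : Matrix (A × B) (A × B) ℂ} (hX : X.PosSemidef) :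
    (ptraceB X).PosSemidef := by
  rw [ptraceB_eq_sum_submatrix]
  exact Matrix.posSemidef_sum _ fun b _ ↦ hX.submatrix _

lemma ptraceB_mono {X Y : Matrix (A × B) (A × B) ℂ} (hXY : X ≤ Y) : ptraceB X ≤ ptraceB Y := by
  rw [Matrix.le_iff, ← ptraceB_sub]
  exact posSemidef_ptraceB hXY

lemma trace_ptraceB [Fintype A] (X : Matrix (A × B) (A × B) ℂ) :
    (ptraceB X).trace = X.trace := by
  simp [ptraceB, Matrix.trace, Fintype.sum_prod_type]

end PartialTrace

theorem entropy_continuity_general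
    {A B : Type*} [Fintype A] [DecidableEq A] [Fintype B] [DecidableEq B]
    {ρ σ : Matrix (A × B) (A × B) ℂ} (hρ : ρ.PosSemidef) (hσ : σ.PosSemidef)
    (htr : ρ.trace = σ.trace) {ε : ℝ} (hdist : trNorm (ρ - σ) / 2 ≤ ε) :
    |vN (ptraceB ρ) - vN (ptraceB σ)| ≤ ε * Real.log (Fintype.card A)
      + (ε + ρ.trace.re) * binEnt (ε / (ε + ρ.trace.re)) := by
  obtain ⟨C, hρC, hσC, hC⟩ := exists_common_upper_bound (hρ.isHermitian.sub hσ.isHermitian)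
  have hδ : 0 ≤ trNorm (ρ - σ) / 2 := div_nonneg (trNorm_nonneg _) zero_le_two
  have hbound := abs_vN_sub_vN_le (δ := trNorm (ρ - σ) / 2) (posSemidef_ptraceB hρ)
    (posSemidef_ptraceB hσ) (ptraceB_mono hρC) (ptraceB_mono hσC)
    (by rw [trace_ptraceB, trace_ptraceB, htr])
    (by rw [trace_ptraceB, trace_ptraceB, hC, ← htr]; ring)
  rw [trace_ptraceB] at hbound
  have htr0 : 0 ≤ ρ.trace.re := (Complex.le_def.1 hρ.trace_nonneg).1
  exact hbound.trans <| add_le_add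
    (mul_le_mul_of_nonneg_right hdist (Real.log_natCast_nonneg _))
    (add_mul_binEnt_div_add_mono hδ hdist htr0 le_rfl)

/-- Audenaert–Winter continuity bound: if `½‖ρ − σ‖₁ ≤ ε ≤ 1` for density matrices
`ρ, σ` on `H_A ⊗ H_B`, then
`|S(ρ_A) − S(σ_A)| ≤ 2ε·log d_A + (1+ε)·h(ε/(1+ε))`. -/
theorem entropy_continuity
    {A B : Type*} [Fintype A] [DecidableEq A] [Fintype B] [DecidableEq B]
    (ρ σ : Matrix (A × B) (A × B) ℂ)
    (hρ : ρ.PosSemidef) (hρ1 : ρ.trace = 1)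
    (hσ : σ.PosSemidef) (hσ1 : σ.trace = 1)
    (ε : ℝ) (hε0 : 0 ≤ ε) (hε1 : ε ≤ 1)
    (hdist : trNorm (ρ - σ) / 2 ≤ ε) :
    |vN (ptraceB ρ) - vN (ptraceB σ)|
      ≤ 2 * ε * Real.log (Fintype.card A) + (1 + ε) * binEnt (ε / (1 + ε)) := by
  have hbound := entropy_continuity_general hρ hσ (hρ1.trans hσ1.symm) hdist
  rw [hρ1, Complex.one_re, add_comm ε 1] at hbound
  linarith [mul_nonneg hε0 (Real.log_natCast_nonneg (Fintype.card A))]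
end

section
/- Let H₁ and H₂ be positive semidefinite Hermitian operators on a finite-dimensional Hilbert space with ground (minimum) energies a₁ and a₂ respectively. Suppose for each H_i the gap between its ground-space eigenvalue and the next-highest eigenvalue is larger than Λ > 0, and the angle between the two ground spaces is θ (i.e., cos θ = max{|⟨u,v⟩| : u, v unit vectors in the respective ground spaces}). Then the minimum eigenvalue of H₁ + H₂ is at least a₁ + a₂ + 2Λ sin²(θ/2). -/
open scoped BigOperators ComplexOrder
open Matrix

/-- The (real) quadratic form `⟨v, H v⟩` of a matrix. -/
noncomputable def quadForm {n : Type*} [Fintype n] (H : Matrix n n ℂ) (v : n → ℂ) : ℝ :=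
  (star v ⬝ᵥ H.mulVec v).re

/-- The squared ℓ²-norm `‖v‖² = ∑ᵢ ‖vᵢ‖²`. -/
noncomputable def nsq {n : Type*} [Fintype n] (v : n → ℂ) : ℝ := ∑ i, ‖v i‖ ^ 2

/-!
A symmetric `T` with eigenvalue `a` on `V` maps `Vᗮ` to itself, so the gap gives
`T ≥ (a + Λ) - Λ P` with `P` the orthogonal projection onto `V`. Summing over the two operators,
it remains to show `P₁ + P₂ ≤ 1 + cos θ`. For that, `‖P₁ x‖² + ‖P₂ x‖² = re ⟪P₁ x + P₂ x, x⟫` is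
bounded by Cauchy–Schwarz, and expanding `‖P₁ x + P₂ x‖²` produces a cross term that the angle
controls. Finally `1 - cos θ = 2 sin² (θ / 2)`.
-/

section InnerProductSpace

open scoped InnerProductSpace

variable {𝕜 E : Type*} [RCLike 𝕜] [NormedAddCommGroup E] [InnerProductSpace 𝕜 E]

theorem norm_inner_le_mul_of_forall_norm_eq_one {V₁ V₂ : Submodule 𝕜 E} {c : ℝ}
    (h : ∀ u ∈ V₁, ∀ v ∈ V₂, ‖u‖ = 1 → ‖v‖ = 1 → ‖⟪u, v⟫_𝕜‖ ≤ c)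
    {u v : E} (hu : u ∈ V₁) (hv : v ∈ V₂) : ‖⟪u, v⟫_𝕜‖ ≤ c * (‖u‖ * ‖v‖) := by
  rcases eq_or_ne u 0 with rfl | hu0
  · simp
  rcases eq_or_ne v 0 with rfl | hv0
  · simp
  have h_unit := h _ (V₁.smul_mem (‖u‖ : 𝕜)⁻¹ hu) _ (V₂.smul_mem (‖v‖ : 𝕜)⁻¹ hv)
    (norm_smul_inv_norm hu0) (norm_smul_inv_norm hv0)
  have h_scale : ‖⟪(‖u‖ : 𝕜)⁻¹ • u, (‖v‖ : 𝕜)⁻¹ • v⟫_𝕜‖ = ‖⟪u, v⟫_𝕜‖ / (‖u‖ * ‖v‖) := by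
    simp only [inner_smul_left, inner_smul_right, norm_mul, RCLike.norm_conj, norm_inv,
      RCLike.norm_ofReal, abs_norm]
    ring
  rwa [h_scale, div_le_iff₀ (by positivity)] at h_unit

theorem norm_add_sq_le_of_norm_inner_le {c : ℝ} (hc : 0 ≤ c) {u v : E}
    (h : ‖⟪u, v⟫_𝕜‖ ≤ c * (‖u‖ * ‖v‖)) :
    ‖u + v‖ ^ 2 ≤ (1 + c) * (‖u‖ ^ 2 + ‖v‖ ^ 2) :=
  calc ‖u + v‖ ^ 2 = ‖u‖ ^ 2 + 2 * RCLike.re ⟪u, v⟫_𝕜 + ‖v‖ ^ 2 := norm_add_sq u v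
    _ ≤ ‖u‖ ^ 2 + c * (2 * ‖u‖ * ‖v‖) + ‖v‖ ^ 2 := by
      linarith [(RCLike.re_le_norm ⟪u, v⟫_𝕜).trans h]
    _ ≤ ‖u‖ ^ 2 + c * (‖u‖ ^ 2 + ‖v‖ ^ 2) + ‖v‖ ^ 2 := by
      gcongr
      exact two_mul_le_add_sq _ _
    _ = (1 + c) * (‖u‖ ^ 2 + ‖v‖ ^ 2) := by ring

theorem norm_sq_starProjection_add_norm_sq_starProjection_le {V₁ V₂ : Submodule 𝕜 E}
    [V₁.HasOrthogonalProjection] [V₂.HasOrthogonalProjection] {c : ℝ} (hc : 0 ≤ c)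
    (h : ∀ u ∈ V₁, ∀ v ∈ V₂, ‖u‖ = 1 → ‖v‖ = 1 → ‖⟪u, v⟫_𝕜‖ ≤ c) (x : E) :
    ‖V₁.starProjection x‖ ^ 2 + ‖V₂.starProjection x‖ ^ 2 ≤ (1 + c) * ‖x‖ ^ 2 := by
  set p := V₁.starProjection x
  set q := V₂.starProjection x
  set s := ‖p‖ ^ 2 + ‖q‖ ^ 2
  have h_inner : s = RCLike.re ⟪p + q, x⟫_𝕜 := by
    rw [inner_add_left, map_add, V₁.re_inner_starProjection_eq_normSq,
      V₂.re_inner_starProjection_eq_normSq]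
    rfl
  have h_sum : ‖p + q‖ ^ 2 ≤ (1 + c) * s :=
    norm_add_sq_le_of_norm_inner_le hc <| norm_inner_le_mul_of_forall_norm_eq_one h
      (V₁.starProjection_apply_mem x) (V₂.starProjection_apply_mem x)
  have hs : 0 ≤ s := by positivity
  have h_sq : s * s ≤ s * ((1 + c) * ‖x‖ ^ 2) :=
    calc s * s = s ^ 2 := (sq s).symm
      _ ≤ (‖p + q‖ * ‖x‖) ^ 2 := by
        gcongr
        exact h_inner.trans_le (re_inner_le_norm _ _)
      _ = ‖p + q‖ ^ 2 * ‖x‖ ^ 2 := mul_pow _ _ _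
      _ ≤ (1 + c) * s * ‖x‖ ^ 2 := by gcongr
      _ = s * ((1 + c) * ‖x‖ ^ 2) := by ring
  rcases hs.eq_or_lt with hs0 | hs0
  · rw [← hs0]
    positivity
  · exact le_of_mul_le_mul_left h_sq hs0

/-- `V` is a space of eigenvectors of the symmetric operator `T` with eigenvalue `a`, and the
energy of `T` on `Vᗮ` is at least `a + Λ`. This is the notion of a ground space `V` with ground
energy `a` and spectral gap `Λ`, stated through quadratic forms so that it makes sense in infinite
dimensions. -/
structure IsGappedEigenspace (T : E →ₗ[𝕜] E) (V : Submodule 𝕜 E) (a Λ : ℝ) : Prop where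
  isSymmetric : T.IsSymmetric
  apply_eq_smul : ∀ v ∈ V, T v = (a : 𝕜) • v
  gap_le : ∀ v ∈ Vᗮ, (a + Λ) * ‖v‖ ^ 2 ≤ RCLike.re ⟪v, T v⟫_𝕜

namespace IsGappedEigenspace

variable {T : E →ₗ[𝕜] E} {V : Submodule 𝕜 E} {a Λ : ℝ}

theorem re_inner_add_apply (hT : IsGappedEigenspace T V a Λ) {p q : E} (hp : p ∈ V)
    (hq : q ∈ Vᗮ) :
    RCLike.re ⟪p + q, T (p + q)⟫_𝕜 = a * ‖p‖ ^ 2 + RCLike.re ⟪q, T q⟫_𝕜 := by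
  have h_orth : ⟪p, q⟫_𝕜 = 0 := Submodule.inner_right_of_mem_orthogonal hp hq
  have h_qTp : ⟪q, T p⟫_𝕜 = 0 := by
    rw [hT.apply_eq_smul p hp, inner_smul_right, inner_eq_zero_symm.mp h_orth, mul_zero]
  have h_pTq : ⟪p, T q⟫_𝕜 = 0 := by
    rw [← hT.isSymmetric, inner_eq_zero_symm, h_qTp]
  have h_pTp : RCLike.re ⟪p, T p⟫_𝕜 = a * ‖p‖ ^ 2 := by
    rw [hT.apply_eq_smul p hp, inner_smul_right, RCLike.re_ofReal_mul, inner_self_eq_norm_sq]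
  rw [map_add, inner_add_left, inner_add_right, inner_add_right, h_pTq, h_qTp, add_zero, zero_add,
    map_add, h_pTp]

theorem le_re_inner_apply [V.HasOrthogonalProjection] (hT : IsGappedEigenspace T V a Λ) (x : E) :
    (a + Λ) * ‖x‖ ^ 2 - Λ * ‖V.starProjection x‖ ^ 2 ≤ RCLike.re ⟪x, T x⟫_𝕜 := by
  set p := V.starProjection x
  set q := Vᗮ.starProjection x
  have hq : q ∈ Vᗮ := Vᗮ.starProjection_apply_mem x
  have h_energy := hT.re_inner_add_apply (V.starProjection_apply_mem x) hq
  rw [V.starProjection_add_starProjection_orthogonal] at h_energy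
  have h_pyth : ‖x‖ ^ 2 = ‖p‖ ^ 2 + ‖q‖ ^ 2 :=
    Submodule.norm_sq_eq_add_norm_sq_starProjection x V
  rw [h_energy, h_pyth]
  linarith [hT.gap_le q hq]

end IsGappedEigenspace

theorem kitaev_geometric_lemma_general {T₁ T₂ : E →ₗ[𝕜] E} {V₁ V₂ : Submodule 𝕜 E}
    [V₁.HasOrthogonalProjection] [V₂.HasOrthogonalProjection] {a₁ a₂ Λ θ : ℝ} (hΛ : 0 ≤ Λ)
    (hT₁ : IsGappedEigenspace T₁ V₁ a₁ Λ) (hT₂ : IsGappedEigenspace T₂ V₂ a₂ Λ)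
    (hθ : 0 ≤ Real.cos θ)
    (hcos : ∀ u ∈ V₁, ∀ v ∈ V₂, ‖u‖ = 1 → ‖v‖ = 1 → ‖⟪u, v⟫_𝕜‖ ≤ Real.cos θ) (x : E) :
    (a₁ + a₂ + 2 * Λ * Real.sin (θ / 2) ^ 2) * ‖x‖ ^ 2 ≤ RCLike.re ⟪x, (T₁ + T₂) x⟫_𝕜 := by
  have h_half : 2 * Real.sin (θ / 2) ^ 2 = 1 - Real.cos θ := by
    rw [Real.sin_sq_eq_half_sub, mul_div_cancel₀ θ two_ne_zero]
    ring
  have h_proj := norm_sq_starProjection_add_norm_sq_starProjection_le hθ hcos x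
  calc (a₁ + a₂ + 2 * Λ * Real.sin (θ / 2) ^ 2) * ‖x‖ ^ 2
      = (a₁ + Λ) * ‖x‖ ^ 2 + (a₂ + Λ) * ‖x‖ ^ 2 - Λ * ((1 + Real.cos θ) * ‖x‖ ^ 2) := by
        linear_combination Λ * ‖x‖ ^ 2 * h_half
    _ ≤ (a₁ + Λ) * ‖x‖ ^ 2 + (a₂ + Λ) * ‖x‖ ^ 2
          - Λ * (‖V₁.starProjection x‖ ^ 2 + ‖V₂.starProjection x‖ ^ 2) := by gcongr
    _ ≤ RCLike.re ⟪x, T₁ x⟫_𝕜 + RCLike.re ⟪x, T₂ x⟫_𝕜 := by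
        linarith [hT₁.le_re_inner_apply x, hT₂.le_re_inner_apply x]
    _ = RCLike.re ⟪x, (T₁ + T₂) x⟫_𝕜 := by
        rw [LinearMap.add_apply, inner_add_right, map_add]

end InnerProductSpace

section EuclideanSpace

open scoped InnerProductSpace

variable {n : Type*} [Fintype n]

/-- A subspace of `n → ℂ` seen in `EuclideanSpace ℂ n`, where the norm and the inner product are
those of `nsq` and `star u ⬝ᵥ v`. -/
abbrev euclideanSubmodule (V : Submodule ℂ (n → ℂ)) : Submodule ℂ (EuclideanSpace ℂ n) :=
  V.comap (WithLp.linearEquiv 2 ℂ (n → ℂ)).toLinearMap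

theorem nsq_ofLp (x : EuclideanSpace ℂ n) : nsq x.ofLp = ‖x‖ ^ 2 :=
  (EuclideanSpace.norm_sq_eq x).symm

theorem nsq_ofLp_eq_one_iff {x : EuclideanSpace ℂ n} : nsq x.ofLp = 1 ↔ ‖x‖ = 1 := by
  rw [nsq_ofLp, pow_eq_one_iff_of_nonneg (norm_nonneg x) two_ne_zero]

theorem star_ofLp_dotProduct_ofLp (x y : EuclideanSpace ℂ n) :
    star x.ofLp ⬝ᵥ y.ofLp = ⟪x, y⟫_ℂ := by
  rw [EuclideanSpace.inner_eq_star_dotProduct, dotProduct_comm]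

theorem norm_inner_le_of_forall_nsq_eq_one {V₁ V₂ : Submodule ℂ (n → ℂ)} {c : ℝ}
    (h : ∀ u ∈ V₁, ∀ v ∈ V₂, nsq u = 1 → nsq v = 1 → ‖star u ⬝ᵥ v‖ ≤ c) :
    ∀ x ∈ euclideanSubmodule V₁, ∀ y ∈ euclideanSubmodule V₂,
      ‖x‖ = 1 → ‖y‖ = 1 → ‖⟪x, y⟫_ℂ‖ ≤ c := by
  intro x hx y hy hx1 hy1
  rw [← star_ofLp_dotProduct_ofLp]
  exact h _ hx _ hy (nsq_ofLp_eq_one_iff.mpr hx1) (nsq_ofLp_eq_one_iff.mpr hy1)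

theorem quadForm_ofLp [DecidableEq n] (H : Matrix n n ℂ) (x : EuclideanSpace ℂ n) :
    quadForm H x.ofLp = RCLike.re ⟪x, H.toEuclideanLin x⟫_ℂ := by
  rw [← star_ofLp_dotProduct_ofLp, ofLp_toLpLin, toLin'_apply]
  rfl

theorem isGappedEigenspace_toEuclideanLin [DecidableEq n] {H : Matrix n n ℂ}
    (hH : H.IsHermitian) {V : Submodule ℂ (n → ℂ)} {a Λ : ℝ}
    (hV : ∀ v ∈ V, H.mulVec v = (a : ℂ) • v)
    (hgap : ∀ v : n → ℂ, (∀ w ∈ V, star w ⬝ᵥ v = 0) → (a + Λ) * nsq v ≤ quadForm H v) :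
    IsGappedEigenspace H.toEuclideanLin (euclideanSubmodule V) a Λ where
  isSymmetric := isSymmetric_toEuclideanLin_iff.mpr hH
  apply_eq_smul v hv := congrArg (WithLp.toLp 2) (hV v.ofLp hv)
  gap_le v hv := by
    rw [← nsq_ofLp, ← quadForm_ofLp]
    refine hgap v.ofLp fun w hw ↦ ?_
    rw [← WithLp.ofLp_toLp 2 w, star_ofLp_dotProduct_ofLp]
    exact hv (WithLp.toLp 2 w) hw

end EuclideanSpace

/-- Kitaev's geometric lemma: let `H₁, H₂` be PSD operators with ground energies `a₁, a₂`,
ground spaces `V₁, V₂`, spectral gaps larger than `Λ > 0` above the ground spaces, and angle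
`θ` between the ground spaces (`cos θ` bounds the overlap of unit ground vectors). Then the
ground energy of `H₁ + H₂` is at least `a₁ + a₂ + 2Λ sin²(θ/2)`. -/
theorem kitaev_geometric_lemma {n : Type*} [Fintype n] [DecidableEq n]
    (H₁ H₂ : Matrix n n ℂ) (hpsd₁ : H₁.PosSemidef) (hpsd₂ : H₂.PosSemidef)
    (a₁ a₂ Λ θ : ℝ) (hΛ : 0 < Λ)
    (V₁ V₂ : Submodule ℂ (n → ℂ))
    -- `V₁, V₂` are eigenspaces of `H₁, H₂` with eigenvalues `a₁, a₂`
    (hV₁ : ∀ v ∈ V₁, H₁.mulVec v = (a₁ : ℂ) • v)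
    (hV₂ : ∀ v ∈ V₂, H₂.mulVec v = (a₂ : ℂ) • v)
    -- `a₁, a₂` are the minimum energies
    (hlow₁ : ∀ v : n → ℂ, a₁ * nsq v ≤ quadForm H₁ v)
    (hlow₂ : ∀ v : n → ℂ, a₂ * nsq v ≤ quadForm H₂ v)
    -- the gap above the ground space is larger than `Λ`
    (hgap₁ : ∀ v : n → ℂ, (∀ w ∈ V₁, star w ⬝ᵥ v = 0) → (a₁ + Λ) * nsq v ≤ quadForm H₁ v)
    (hgap₂ : ∀ v : n → ℂ, (∀ w ∈ V₂, star w ⬝ᵥ v = 0) → (a₂ + Λ) * nsq v ≤ quadForm H₂ v)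
    -- `θ` is the angle between the two ground spaces
    (hθ0 : 0 ≤ θ) (hθ1 : θ ≤ Real.pi / 2)
    (hcos : ∀ u ∈ V₁, ∀ v ∈ V₂, nsq u = 1 → nsq v = 1 → ‖star u ⬝ᵥ v‖ ≤ Real.cos θ) :
    ∀ v : n → ℂ,
      (a₁ + a₂ + 2 * Λ * Real.sin (θ / 2) ^ 2) * nsq v ≤ quadForm (H₁ + H₂) v := by
  intro v
  have hcosθ : 0 ≤ Real.cos θ :=
    Real.cos_nonneg_of_neg_pi_div_two_le_of_le (by linarith [Real.pi_pos]) hθ1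
  rw [← WithLp.ofLp_toLp 2 v, nsq_ofLp, quadForm_ofLp, map_add]
  exact kitaev_geometric_lemma_general hΛ.le
    (isGappedEigenspace_toEuclideanLin hpsd₁.isHermitian hV₁ hgap₁)
    (isGappedEigenspace_toEuclideanLin hpsd₂.isHermitian hV₂ hgap₂)
    hcosθ (norm_inner_le_of_forall_nsq_eq_one hcos) _
end
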